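/- Let p and q be real numbers with 0 < p and 5p < q, set b₀ = (1/p)·√((q−5p)/(5(q−p))), ξ₀ = (1,0,0) and ξ₊ = (1, b₀, 0). Then the ratio of Einstein–Hilbert energies satisfies EH(ξ₊)/EH(ξ₀) = (1 + p²b₀²·(q−p)/(p+q)) · (25(q−p)²/(16q²))^{1/3}. -/

import Mathlib

/-- Product of the values of the affine function `ξ(x,y) = 1 + bx + cy` at the four
vertices `(−p,−q), (−p,q), (p,q), (p,−q)` of the moment rectangle. -/
def xiProd (p q b c : ℝ) : ℝ :=
  (1 - p * b - q * c) * (1 - p * b + q * c) * (1 + p * b + q * c) * (1 + p * b - q * c)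

/-- Total volume `V(ξ) = 4pq/(ξ₁ξ₂ξ₃ξ₄)`. -/
noncomputable def sasakiVol (p q b c : ℝ) : ℝ := 4 * p * q / xiProd p q b c

/-- Total Tanaka–Webster scalar curvature
`S(ξ) = 2q/(ξ₁ξ₂) + 2p/(ξ₂ξ₃) + 2q/(ξ₃ξ₄) + 2p/(ξ₄ξ₁)`. -/
noncomputable def sasakiScal (p q b c : ℝ) : ℝ :=
  2 * q / ((1 - p * b - q * c) * (1 - p * b + q * c))
  + 2 * p / ((1 - p * b + q * c) * (1 + p * b + q * c))
  + 2 * q / ((1 + p * b + q * c) * (1 + p * b - q * c))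
  + 2 * p / ((1 + p * b - q * c) * (1 - p * b - q * c))

/-- Einstein–Hilbert functional `EH(ξ) = S(ξ)/V(ξ)^{2/3}` on the Sasaki–Reeb cone. -/
noncomputable def sasakiEH (p q b c : ℝ) : ℝ :=
  sasakiScal p q b c / (sasakiVol p q b c) ^ ((2 : ℝ) / 3)

/-!
On the axis `c = 0`, put `t = p * b`. Both `V` and `S` then have the common denominator
`(1 - t²)²`, and since `EH` is `S / V^{2/3}`, a net factor `(1 - t²)^{-2}` to the power `1/3`
survives. The equation for `b` amounts to `5 (q - p) (1 - t²) = 4 q`, which turns this factor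
into `(25 (q - p)² / (16 q²))^{1/3}`.
-/

theorem div_div_rpow_div (s r : ℝ) {v w : ℝ} (hv : 0 ≤ v) (hw : 0 < w) :
    s / w / (v / w) ^ r = s / v ^ r * w⁻¹ ^ (1 - r) := by
  rw [Real.div_rpow hv hw.le, Real.rpow_sub (inv_pos.mpr hw), Real.rpow_one,
    Real.inv_rpow hw.le]
  ring

theorem sasakiVol_zero_right (p q b : ℝ) :
    sasakiVol p q b 0 = 4 * p * q / (1 - (p * b) ^ 2) ^ 2 := by
  unfold sasakiVol xiProd
  congr 1
  ring

theorem sasakiScal_zero_right (p q : ℝ) {b : ℝ} (hb : 1 - (p * b) ^ 2 ≠ 0) :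
    sasakiScal p q b 0 =
      4 * (p + q + (q - p) * (p * b) ^ 2) / (1 - (p * b) ^ 2) ^ 2 := by
  have factored : 1 - (p * b) ^ 2 = (1 - p * b) * (1 + p * b) := by ring
  obtain ⟨left_ne, right_ne⟩ := mul_ne_zero_iff.mp (factored ▸ hb)
  simp only [sasakiScal, factored, mul_zero, sub_zero, add_zero]
  field_simp
  ring

theorem sasakiEH_zero_right {p q b : ℝ} (hpq : 0 ≤ p * q) (hb : 1 - (p * b) ^ 2 ≠ 0) :
    sasakiEH p q b 0 =
      4 * (p + q + (q - p) * (p * b) ^ 2) / (4 * p * q) ^ ((2 : ℝ) / 3) *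
        ((1 - (p * b) ^ 2) ^ 2)⁻¹ ^ ((1 : ℝ) / 3) := by
  have vol_nonneg : 0 ≤ 4 * p * q := by linarith
  rw [sasakiEH, sasakiVol_zero_right, sasakiScal_zero_right p q hb,
    div_div_rpow_div _ _ vol_nonneg (sq_pos_of_ne_zero hb)]
  norm_num

theorem sasakiEH_zero_zero {p q : ℝ} (hpq : 0 ≤ p * q) :
    sasakiEH p q 0 0 = 4 * (p + q) / (4 * p * q) ^ ((2 : ℝ) / 3) := by
  simpa using sasakiEH_zero_right (b := 0) hpq (by simp)

theorem sasakiEH_zero_right_div_sasakiEH_zero_zero {p q b : ℝ} (hpq : 0 < p * q)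
    (hb : 1 - (p * b) ^ 2 ≠ 0) :
    sasakiEH p q b 0 / sasakiEH p q 0 0 =
      (1 + p ^ 2 * b ^ 2 * (q - p) / (p + q)) *
        ((1 - (p * b) ^ 2) ^ 2)⁻¹ ^ ((1 : ℝ) / 3) := by
  have add_ne : p + q ≠ 0 := by
    intro add_eq_zero
    rw [eq_neg_of_add_eq_zero_right add_eq_zero] at hpq
    nlinarith [sq_nonneg p]
  have rpow_ne : (4 * p * q) ^ ((2 : ℝ) / 3) ≠ 0 :=
    (Real.rpow_pos_of_pos (by linarith) _).ne'
  rw [sasakiEH_zero_right hpq.le hb, sasakiEH_zero_zero hpq.le]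
  field_simp

theorem five_mul_sub_mul_sq_of_eq_sqrt {p q b : ℝ} (hp : 0 < p) (hq : 5 * p ≤ q)
    (hb : b = (1 / p) * Real.sqrt ((q - 5 * p) / (5 * (q - p)))) :
    5 * (q - p) * (p * b) ^ 2 = q - 5 * p := by
  have q_sub_p_pos : 0 < q - p := by linarith
  have radicand_nonneg : 0 ≤ (q - 5 * p) / (5 * (q - p)) :=
    div_nonneg (by linarith) (by positivity)
  rw [hb, ← mul_assoc, mul_one_div_cancel hp.ne', one_mul, Real.sq_sqrt radicand_nonneg]
  field_simp

theorem stmt3_general {p q b : ℝ} (hpq : 0 < p * q)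
    (hb : 5 * (q - p) * (p * b) ^ 2 = q - 5 * p) :
    sasakiEH p q b 0 / sasakiEH p q 0 0 =
      (1 + p ^ 2 * b ^ 2 * (q - p) / (p + q)) *
        (25 * (q - p) ^ 2 / (16 * q ^ 2)) ^ ((1 : ℝ) / 3) := by
  have key : 5 * (q - p) * (1 - (p * b) ^ 2) = 4 * q := by linear_combination -hb
  have q_ne : q ≠ 0 := right_ne_zero_of_mul hpq.ne'
  have one_sub_ne : 1 - (p * b) ^ 2 ≠ 0 :=
    right_ne_zero_of_mul (key ▸ mul_ne_zero four_ne_zero q_ne)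
  have base_eq : 25 * (q - p) ^ 2 / (16 * q ^ 2) = ((1 - (p * b) ^ 2) ^ 2)⁻¹ := by
    rw [← one_div, div_eq_div_iff (by positivity) (pow_ne_zero 2 one_sub_ne)]
    linear_combination (5 * (q - p) * (1 - (p * b) ^ 2) + 4 * q) * key
  rw [base_eq, sasakiEH_zero_right_div_sasakiEH_zero_zero hpq one_sub_ne]

/-- for `0 < p`, `5p < q` and `b₀ = (1/p)·√((q−5p)/(5(q−p)))`, the ratio
of Einstein–Hilbert energies of `ξ₊ = (1,b₀,0)` and `ξ₀ = (1,0,0)` is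
`(1 + p²b₀²(q−p)/(p+q)) · (25(q−p)²/(16q²))^{1/3}`. -/
theorem stmt3 (p q : ℝ) (hp : 0 < p) (hq : 5 * p < q)
    (b₀ : ℝ) (hb₀ : b₀ = (1 / p) * Real.sqrt ((q - 5 * p) / (5 * (q - p)))) :
    sasakiEH p q b₀ 0 / sasakiEH p q 0 0
      = (1 + p ^ 2 * b₀ ^ 2 * (q - p) / (p + q))
          * (25 * (q - p) ^ 2 / (16 * q ^ 2)) ^ ((1 : ℝ) / 3) :=
  stmt3_general (mul_pos hp (by linarith)) (five_mul_sub_mul_sq_of_eq_sqrt hp hq.le hb₀)
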